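/- Let ℋ be the family of trees of the form G_w(P₃, T₁, …, T_l) or G_w(P₂, P₂, T₁, …, T_l) with l ≥ 0, where each T_i is isomorphic to P₄ or to the star K_{1,3}. If T is a tree of order n with n ≡ 0 (mod 3), n ≥ 3, and T is not isomorphic to any member of ℋ, then m(T) ≤ 3^{n/3−1} + 1. -/

import Mathlib

open scoped Classical

variable {V : Type*}

/-- The number of neighbors of `v` that lie inside the finite set `s`,
i.e. the degree of `v` in the subgraph induced by `s` (when `v ∈ s`). -/
noncomputable def nbrCount (G : SimpleGraph V) (s : Finset V) (v : V) : ℕ :=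
  {w ∈ (s : Set V) | G.Adj v w}.ncard

/-- `s` is a dissociation set of `G`: the subgraph induced by `s` has maximum degree at most 1. -/
def IsDissoc (G : SimpleGraph V) (s : Finset V) : Prop :=
  ∀ v ∈ s, nbrCount G s v ≤ 1

/-- The dissociation number of the subgraph of `G` induced by `A`. -/
noncomputable def dissNumOn (G : SimpleGraph V) (A : Set V) : ℕ :=
  sSup {n | ∃ s : Finset V, ↑s ⊆ A ∧ IsDissoc G s ∧ s.card = n}

/-- `s` is a maximum dissociation set of the subgraph of `G` induced by `A`. -/
def IsMaxDissocOn (G : SimpleGraph V) (A : Set V) (s : Finset V) : Prop :=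
  ↑s ⊆ A ∧ IsDissoc G s ∧ s.card = dissNumOn G A

/-- The number of maximum dissociation sets of the subgraph of `G` induced by `A`. -/
noncomputable def numMaxDissocOn (G : SimpleGraph V) (A : Set V) : ℕ :=
  Nat.card {s : Finset V // IsMaxDissocOn G A s}

/-- The dissociation number of `G`. -/
noncomputable def dissNum (G : SimpleGraph V) : ℕ :=
  dissNumOn G Set.univ

/-- `s` is a maximum dissociation set of `G`. -/
def IsMaxDissoc (G : SimpleGraph V) (s : Finset V) : Prop :=
  IsMaxDissocOn G Set.univ s

/-- The number `m(G)` of maximum dissociation sets of `G`. -/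
noncomputable def numMaxDissoc (G : SimpleGraph V) : ℕ :=
  numMaxDissocOn G Set.univ

/-- `m(G[A], u⁻)`: maximum dissociation sets of `G[A]` not containing `u`. -/
noncomputable def numMaxDissocOnAway (G : SimpleGraph V) (A : Set V) (u : V) : ℕ :=
  Nat.card {s : Finset V // IsMaxDissocOn G A s ∧ u ∉ s}

/-- `m(G[A], u⁰)`: maximum dissociation sets of `G[A]` containing `u` with induced degree 0. -/
noncomputable def numMaxDissocOnDeg0 (G : SimpleGraph V) (A : Set V) (u : V) : ℕ :=
  Nat.card {s : Finset V // IsMaxDissocOn G A s ∧ u ∈ s ∧ nbrCount G s u = 0}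

/-- `m(G[A], u¹)`: maximum dissociation sets of `G[A]` containing `u` with induced degree 1. -/
noncomputable def numMaxDissocOnDeg1 (G : SimpleGraph V) (A : Set V) (u : V) : ℕ :=
  Nat.card {s : Finset V // IsMaxDissocOn G A s ∧ u ∈ s ∧ nbrCount G s u = 1}

/-- `m(G, u⁻)`. -/
noncomputable def numMaxDissocAway (G : SimpleGraph V) (u : V) : ℕ :=
  numMaxDissocOnAway G Set.univ u

/-- `m(G, u⁰)`. -/
noncomputable def numMaxDissocDeg0 (G : SimpleGraph V) (u : V) : ℕ :=
  numMaxDissocOnDeg0 G Set.univ u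

/-- `m(G, u¹)`. -/
noncomputable def numMaxDissocDeg1 (G : SimpleGraph V) (u : V) : ℕ :=
  numMaxDissocOnDeg1 G Set.univ u

/-- `m̄`: relative count, `numMaxDissocOn G B` if `dissNumOn G B = dissNumOn G A`, else 0. -/
noncomputable def mbar (G : SimpleGraph V) (A B : Set V) : ℕ :=
  if dissNumOn G B = dissNumOn G A then numMaxDissocOn G B else 0

/-- `G` is a potted graph whose (unique) cycle has length `k`: `G` is connected and unicyclic
(equivalently, connected with as many edges as vertices), and its cycle has length `k` and
contains a unique vertex of degree larger than 2. -/
def IsPotted (G : SimpleGraph V) (k : ℕ) : Prop :=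
  G.Connected ∧ G.edgeSet.ncard = Nat.card V ∧
    ∃ (v : V) (c : G.Walk v v), c.IsCycle ∧ c.length = k ∧
      ∃! u, u ∈ c.support ∧ 2 < (G.neighborSet u).ncard

/-- Base (one-directional) edge relation for the trees in the family `ℋ`.
The vertex `Sum.inl ()` is the identification vertex `w`.  If `pa = true` the
`Fin 2` part forms a pendant path `w - s₀ - s₁` (a `P₃` with a leaf identified
with `w`); if `pa = false` both vertices of the `Fin 2` part are pendant
neighbors of `w` (two copies of `P₂` with a leaf identified with `w`).
The `i`-th branch `Fin l × Fin 3` is a `P₄` with a leaf identified with `w`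
(a path `w - (i,0) - (i,1) - (i,2)`) when `bt i = true`, and a `K_{1,3}` with a
leaf identified with `w` (edges `w - (i,0)`, `(i,0) - (i,1)`, `(i,0) - (i,2)`)
when `bt i = false`. -/
def HBase (pa : Bool) (l : ℕ) (bt : Fin l → Bool) :
    Unit ⊕ (Fin 2 ⊕ Fin l × Fin 3) → Unit ⊕ (Fin 2 ⊕ Fin l × Fin 3) → Prop
  | Sum.inl _, Sum.inr (Sum.inl j) => pa = false ∨ j = 0
  | Sum.inr (Sum.inl j), Sum.inr (Sum.inl j') => pa = true ∧ j = 0 ∧ j' = 1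
  | Sum.inl _, Sum.inr (Sum.inr (_, j)) => j = 0
  | Sum.inr (Sum.inr (i, j)), Sum.inr (Sum.inr (i', j')) =>
      i = i' ∧ ((bt i = true ∧ ((j = 0 ∧ j' = 1) ∨ (j = 1 ∧ j' = 2))) ∨
                (bt i = false ∧ j = 0 ∧ (j' = 1 ∨ j' = 2)))
  | _, _ => False

/-- A member of the family `ℋ`: `G_w(P₃, T₁, …, T_l)` (when `pa = true`) or
`G_w(P₂, P₂, T₁, …, T_l)` (when `pa = false`), where `T_i` is `P₄` if
`bt i = true` and `K_{1,3}` if `bt i = false`. -/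
def HModel (pa : Bool) (l : ℕ) (bt : Fin l → Bool) :
    SimpleGraph (Unit ⊕ (Fin 2 ⊕ Fin l × Fin 3)) :=
  SimpleGraph.fromRel (HBase pa l bt)

/-!
Every tree arises by repeatedly joining two rooted trees by an edge between their roots. The numbers
of largest dissociation sets that avoid the root, contain it as an isolated vertex, or contain it as
a vertex of degree one, together with the relative sizes of these sets, determine the same data for
the joined tree.

Unless all branches at the root have at most two vertices, moving the root writes the tree as a join
of a tree with this property and a smaller tree. The former has order three or contributes almost
nothing, so bounds for all three residues of the order modulo `3` follow by induction. If the order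
is divisible by `3`, the bound can only fail when the root of the smaller tree is avoided by the
maximal possible number `3 ^ k` of largest dissociation sets. Then every branch there has order
three, up to two leftover vertices, and the tree belongs to `ℋ`.
-/

/-! ### Rooted plane trees and their states -/

/-- Nonempty rooted plane trees: `single` is a single vertex, and `graft t s` hangs the root of `s`
below the root of `t`. They index the ways of building a tree by adding one edge at a time. -/
inductive PlaneTree : Type
  | single : PlaneTree
  | graft : PlaneTree → PlaneTree → PlaneTree

/-- How the largest dissociation sets of a rooted tree use the root: compared with the sets avoiding
the root, the sets containing it are never larger (`neutral`), are one larger already with an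
isolated root (`free`), or are one larger only when the root has a neighbor in them (`paired`). -/
inductive RootKind : Type
  | neutral
  | free
  | paired
  deriving DecidableEq

namespace RootKind

/-- The number of vertices that may be discounted, according to the kind of the root, in the bound
`3 ^ (n / 3)` on the number of maximum dissociation sets, see
`PlaneTree.total_le_threePow_sub_deficit`. -/
def deficit : RootKind → ℕ
  | neutral => 0
  | free => 1
  | paired => 2

/-- The number of vertices that may be discounted, according to the kind of the root, in the bound
`3 ^ ((n - 1) / 3)` on the number of largest dissociation sets avoiding the root, see
`PlaneTree.out_le_threePow`. -/
def rank : RootKind → ℕ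
  | free => 0
  | paired => 1
  | neutral => 2

theorem deficit_le_rank_add_one (k : RootKind) : k.deficit ≤ k.rank + 1 := by
  cases k <;> decide

end RootKind

/-- The numbers of largest dissociation sets of a rooted tree avoiding the root (`out`), with an
isolated root (`isolated`) and with a matched root (`matched`). If `d` is the dissociation number of
the tree without its root, the sets counted by `out` have size `d`, those counted by `matched` have
size `d`, `d + 1`, `d + 1` and those counted by `isolated` have size `d`, `d + 1`, `d` for the kinds
`neutral`, `free`, `paired`. -/
@[ext]
structure RootState where
  kind : RootKind
  out : ℕ
  isolated : ℕ
  matched : ℕ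

namespace RootState

/-- The number of maximum dissociation sets. -/
def total : RootState → ℕ
  | ⟨.neutral, x, y, z⟩ => x + y + z
  | ⟨.free, _, y, z⟩ => y + z
  | ⟨.paired, _, _, z⟩ => z

/-- The state of `PlaneTree.graft t s` in terms of the states of `t` and `s`: the root of `s` is
arbitrary if the root of `t` is avoided, and otherwise it is avoided or matched with that root. -/
def graft : RootState → RootState → RootState
  | ⟨.neutral, x, y, z⟩, ⟨.neutral, p, q, r⟩ => ⟨.neutral, x * (p + q + r), y * p, z * p + y * q⟩
  | ⟨.neutral, x, y, _⟩, ⟨.free, _, q, r⟩ => ⟨.neutral, x * (q + r), 0, y * q⟩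
  | ⟨.neutral, x, _, _⟩, ⟨.paired, _, _, r⟩ => ⟨.neutral, x * r, 0, 0⟩
  | ⟨.free, x, y, z⟩, ⟨.neutral, p, q, r⟩ => ⟨.free, x * (p + q + r), y * p, z * p + y * q⟩
  | ⟨.free, x, y, _⟩, ⟨.free, p, q, r⟩ => ⟨.paired, x * (q + r), y * p, y * q⟩
  | ⟨.free, x, y, z⟩, ⟨.paired, p, q, r⟩ => ⟨.neutral, x * r, y * p, z * p + y * q⟩
  | ⟨.paired, x, y, z⟩, ⟨.neutral, p, q, r⟩ => ⟨.paired, x * (p + q + r), y * p, z * p⟩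
  | ⟨.paired, x, y, z⟩, ⟨.free, p, q, r⟩ => ⟨.neutral, x * (q + r), 0, z * p + y * q⟩
  | ⟨.paired, x, _, z⟩, ⟨.paired, p, _, r⟩ => ⟨.neutral, x * r, 0, z * p⟩

theorem graft_right_comm (a b c : RootState) : (a.graft b).graft c = (a.graft c).graft b := by
  obtain ⟨k, x, y, z⟩ := a
  obtain ⟨l, p, q, r⟩ := b
  obtain ⟨m, u, v, w⟩ := c
  cases k <;> cases l <;> cases m <;> ext <;> simp only [graft] <;> ring

theorem total_graft_comm (a b : RootState) : (a.graft b).total = (b.graft a).total := by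
  obtain ⟨k, x, y, z⟩ := a
  obtain ⟨l, p, q, r⟩ := b
  cases k <;> cases l <;> simp only [graft, total] <;> ring

theorem out_graft (a b : RootState) : (a.graft b).out = a.out * b.total := by
  obtain ⟨k, x, y, z⟩ := a
  obtain ⟨l, p, q, r⟩ := b
  cases k <;> cases l <;> rfl

theorem rank_kind_graft_le (a b : RootState) :
    (a.graft b).kind.rank ≤ a.kind.rank + b.kind.deficit := by
  obtain ⟨k, x, y, z⟩ := a
  obtain ⟨l, p, q, r⟩ := b
  cases k <;> cases l <;> simp [graft, RootKind.rank, RootKind.deficit]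

section

variable {a b : RootState} (h : (a.graft b).kind ≠ .neutral)
include h

theorem deficit_kind_graft : (a.graft b).kind.deficit = a.kind.deficit + b.kind.deficit := by
  obtain ⟨k, x, y, z⟩ := a
  obtain ⟨l, p, q, r⟩ := b
  cases k <;> cases l <;> simp [graft, RootKind.deficit] at h ⊢

theorem total_graft_le : (a.graft b).total ≤ a.total * b.total := by
  obtain ⟨k, x, y, z⟩ := a
  obtain ⟨l, p, q, r⟩ := b
  cases k <;> cases l <;> simp [graft, total] at h ⊢ <;>
    nlinarith [Nat.zero_le (y * r), Nat.zero_le (z * q), Nat.zero_le (z * r), Nat.zero_le (y * q),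
      Nat.zero_le (y * p)]

end

/-- The positivity properties shared by the states of all rooted trees. -/
def IsPositive : RootState → Prop
  | ⟨.neutral, x, y, z⟩ => 0 < x ∧ (0 < y → 0 < z)
  | ⟨.free, x, y, _⟩ => 0 < x ∧ 0 < y
  | ⟨.paired, x, y, z⟩ => 0 < x ∧ 0 < y ∧ 0 < z

theorem IsPositive.graft {a b : RootState} (ha : a.IsPositive) (hb : b.IsPositive) :
    (a.graft b).IsPositive := by
  obtain ⟨k, x, y, z⟩ := a
  obtain ⟨l, p, q, r⟩ := b
  cases k <;> cases l <;> simp only [RootState.graft, IsPositive] at * <;> simp <;> grind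

theorem IsPositive.out_pos {a : RootState} (ha : a.IsPositive) : 0 < a.out := by
  obtain ⟨k, x, y, z⟩ := a
  cases k <;> exact ha.1

theorem IsPositive.total_pos {a : RootState} (ha : a.IsPositive) : 0 < a.total := by
  obtain ⟨k, x, y, z⟩ := a
  cases k <;> simp only [IsPositive, total] at * <;> omega

theorem IsPositive.out_add_isolated_lt_total {a : RootState} (ha : a.IsPositive)
    (hk : a.kind = .neutral) (hi : 0 < a.isolated) : a.out + a.isolated < a.total := by
  obtain ⟨k, x, y, z⟩ := a
  subst hk
  simp only [IsPositive, total] at *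
  omega

end RootState

namespace PlaneTree

/-- The number of vertices. -/
def size : PlaneTree → ℕ
  | single => 1
  | graft t s => t.size + s.size

/-- The counts of largest dissociation sets, computed along the tree; their meaning for graphs is
`Realizes.isStateOf_state`. -/
def state : PlaneTree → RootState
  | single => ⟨.free, 1, 1, 0⟩
  | graft t s => t.state.graft s.state

/-- The number of maximum dissociation sets, computed along the tree. -/
def total (t : PlaneTree) : ℕ := t.state.total

theorem size_pos (t : PlaneTree) : 0 < t.size := by
  induction t with
  | single => simp [size]
  | graft t s ht _ => rw [size]; omega

theorem eq_single {t : PlaneTree} (h : t.size = 1) : t = single := by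
  cases t with
  | single => rfl
  | graft t s => have := t.size_pos; have := s.size_pos; rw [size] at h; omega

theorem eq_graft_single {t : PlaneTree} (h : t.size = 2) : t = graft single single := by
  cases t with
  | single => simp [size] at h
  | graft t s =>
    have := t.size_pos
    have := s.size_pos
    rw [size] at h
    rw [eq_single (t := t) (by omega), eq_single (t := s) (by omega)]

theorem isPositive_state (t : PlaneTree) : t.state.IsPositive := by
  induction t with
  | single => simp [state, RootState.IsPositive]
  | graft t s ht hs => exact ht.graft hs

theorem rank_kind_lt_size (t : PlaneTree) : t.state.kind.rank < t.size := by
  induction t with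
  | single => decide
  | graft t s ht hs =>
    have := t.state.rank_kind_graft_le s.state
    have := s.state.kind.deficit_le_rank_add_one
    rw [state, size]
    omega

theorem three_le_size {t : PlaneTree} (h : t.state.kind = .neutral) : 3 ≤ t.size := by
  have := t.rank_kind_lt_size
  rwa [h] at this

/-- `Reorder t s` means that `s` arises from `t` by permuting the branches at the root. -/
inductive Reorder : PlaneTree → PlaneTree → Prop
  | refl (t) : Reorder t t
  | trans {t s r} : Reorder t s → Reorder s r → Reorder t r
  | right_comm (t s r) : Reorder (graft (graft t s) r) (graft (graft t r) s)
  | congr {t s} (r) : Reorder t s → Reorder (graft t r) (graft s r)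

/-- `Reroot t s` means that `s` arises from `t` by permuting branches and moving the root, so that
`t` and `s` have the same underlying unrooted tree. -/
inductive Reroot : PlaneTree → PlaneTree → Prop
  | of_reorder {t s} : Reorder t s → Reroot t s
  | swap (t s) : Reroot (graft t s) (graft s t)
  | trans {t s r} : Reroot t s → Reroot s r → Reroot t r

theorem Reorder.size_eq {t s : PlaneTree} (h : Reorder t s) : t.size = s.size := by
  induction h with
  | refl => rfl
  | trans _ _ h₁ h₂ => exact h₁.trans h₂
  | right_comm => simp only [size]; omega
  | congr _ _ ih => simp only [size, ih]

theorem Reorder.state_eq {t s : PlaneTree} (h : Reorder t s) : t.state = s.state := by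
  induction h with
  | refl => rfl
  | trans _ _ h₁ h₂ => exact h₁.trans h₂
  | right_comm => exact RootState.graft_right_comm _ _ _
  | congr _ _ ih => simp only [state, ih]

theorem Reroot.size_eq {t s : PlaneTree} (h : Reroot t s) : t.size = s.size := by
  induction h with
  | of_reorder h => exact h.size_eq
  | swap t s => exact Nat.add_comm _ _
  | trans _ _ h₁ h₂ => exact h₁.trans h₂

theorem Reroot.total_eq {t s : PlaneTree} (h : Reroot t s) : t.total = s.total := by
  induction h with
  | of_reorder h => simp only [total, h.state_eq]
  | swap t s => exact RootState.total_graft_comm _ _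
  | trans _ _ h₁ h₂ => exact h₁.trans h₂

end PlaneTree

/-! ### Bounds by residues modulo three -/

/-- The order of magnitude `3 ^ ⌊n / 3⌋` of the number of maximum dissociation sets of a tree with
`n` vertices. -/
def threePow (n : ℕ) : ℕ := 3 ^ (n / 3)

theorem threePow_mono : Monotone threePow := fun _ _ h =>
  Nat.pow_le_pow_right (by norm_num) (Nat.div_le_div_right h)

theorem threePow_mul_le (m n : ℕ) : threePow m * threePow n ≤ threePow (m + n) := by
  rw [threePow, threePow, ← pow_add]
  exact Nat.pow_le_pow_right (by norm_num) (by omega)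

theorem three_mul_threePow_mul_le {m n : ℕ} (h : 3 ≤ m % 3 + n % 3) :
    3 * (threePow m * threePow n) ≤ threePow (m + n) := by
  rw [threePow, threePow, ← pow_add, ← pow_succ']
  exact Nat.pow_le_pow_right (by norm_num) (by omega)

theorem threePow_le {m k : ℕ} (h : m < 3 * k + 3) : threePow m ≤ 3 ^ k :=
  Nat.pow_le_pow_right (by norm_num) (by omega)

theorem le_threePow {m k : ℕ} (h : 3 * k ≤ m) : 3 ^ k ≤ threePow m :=
  Nat.pow_le_pow_right (by norm_num) (by omega)

namespace PlaneTree

theorem out_graft (t s : PlaneTree) : (graft t s).state.out = t.state.out * s.total :=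
  RootState.out_graft _ _

theorem total_le_threePow_sub_deficit {t : PlaneTree}
    (h : ∀ s : PlaneTree, s.size ≤ t.size → s.total ≤ threePow s.size) :
    t.total ≤ threePow (t.size - t.state.kind.deficit) := by
  induction t with
  | single => decide
  | graft t s ht hs =>
    by_cases hk : (graft t s).state.kind = .neutral
    · simpa [hk, RootKind.deficit] using h _ le_rfl
    simp only [size] at h ⊢
    have ht' := ht fun r hr => h r (by omega)
    have hs' := hs fun r hr => h r (by omega)
    have hdt := t.state.kind.deficit_le_rank_add_one
    have hds := s.state.kind.deficit_le_rank_add_one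
    have hrt := t.rank_kind_lt_size
    have hrs := s.rank_kind_lt_size
    calc (graft t s).total ≤ t.total * s.total := RootState.total_graft_le hk
      _ ≤ _ := Nat.mul_le_mul ht' hs'
      _ ≤ _ := threePow_mul_le _ _
      _ = _ := by rw [state, RootState.deficit_kind_graft hk]; congr 1; omega

theorem out_le_threePow {t : PlaneTree}
    (h : ∀ s : PlaneTree, s.size < t.size → s.total ≤ threePow s.size) :
    t.state.out ≤ threePow (t.size - 1 - t.state.kind.rank) := by
  induction t with
  | single => decide
  | graft t s ht _ =>
    simp only [size] at h ⊢
    have hpos := t.size_pos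
    have ht' := ht fun r hr => h r (by omega)
    have hs' := total_le_threePow_sub_deficit fun r (hr : r.size ≤ s.size) => h r (by omega)
    have hrank := t.state.rank_kind_graft_le s.state
    have hds := s.state.kind.deficit_le_rank_add_one
    have hrt := t.rank_kind_lt_size
    have hrs := s.rank_kind_lt_size
    calc (graft t s).state.out = t.state.out * s.total := out_graft t s
      _ ≤ _ := Nat.mul_le_mul ht' hs'
      _ ≤ _ := threePow_mul_le _ _
      _ ≤ _ := threePow_mono (by rw [state]; omega)

/-- The branches of the members of `ℋ`: a path on three vertices rooted at an end (`true`) or at its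
center (`false`). Joining the root to a new vertex gives `P₄` or `K_{1,3}`. -/
def branch : Bool → PlaneTree
  | true => graft single (graft single single)
  | false => graft (graft single single) single

/-- A single vertex, the root, with the branches in the list attached to it. -/
def hub : List Bool → PlaneTree
  | [] => single
  | b :: bs => graft (hub bs) (branch b)

/-- The member of `ℋ` with the given branches, rooted at its vertex `w`; as in `HModel`, the Boolean
tells whether the remaining two vertices form a `P₃` with `w` or are two leaves at `w`. -/
def familyH : Bool → List Bool → PlaneTree
  | true, bs => graft (hub bs) (graft single single)
  | false, bs => graft (graft (hub bs) single) single

theorem size_branch (b : Bool) : (branch b).size = 3 := by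
  cases b <;> rfl

theorem eq_branch {t : PlaneTree} (h : t.size = 3) : ∃ b, t = branch b := by
  cases t with
  | single => simp [size] at h
  | graft t s =>
    have := t.size_pos
    have := s.size_pos
    rw [size] at h
    rcases (by omega : t.size = 1 ∧ s.size = 2 ∨ t.size = 2 ∧ s.size = 1) with h | h
    · exact ⟨true, by rw [eq_single h.1, eq_graft_single h.2, branch]⟩
    · exact ⟨false, by rw [eq_graft_single h.1, eq_single h.2, branch]⟩

theorem size_hub (bs : List Bool) : (hub bs).size = 3 * bs.length + 1 := by
  induction bs with
  | nil => rfl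
  | cons b bs ih => rw [hub, size, ih, size_branch, List.length_cons]; omega

theorem size_familyH (pa : Bool) (bs : List Bool) : (familyH pa bs).size = 3 * bs.length + 3 := by
  cases pa <;> simp [familyH, size, size_hub]

theorem state_hub (bs : List Bool) :
    (hub bs).state = ⟨.free, 3 ^ bs.length, 1, bs.count true⟩ := by
  induction bs with
  | nil => rfl
  | cons b bs ih =>
    cases b <;> simp [hub, branch, state, ih, RootState.graft, pow_succ]

theorem total_familyH_le (pa : Bool) (bs : List Bool) :
    (familyH pa bs).total ≤ 3 ^ bs.length + bs.length + 2 := by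
  have := List.count_le_length (a := true) (l := bs)
  cases pa <;> simp only [total, familyH, state, state_hub, RootState.graft, RootState.total] <;>
    omega

theorem reorder_graft_familyH_branch (pa b : Bool) (bs : List Bool) :
    Reorder (graft (familyH pa bs) (branch b)) (familyH pa (b :: bs)) := by
  cases pa with
  | true => exact .right_comm _ _ _
  | false => exact .trans (.right_comm _ _ _) (.congr _ (.right_comm _ _ _))

/-- The shapes whose root is avoided by `3 ^ ((n - 1) / 3)` largest dissociation sets: `hub bs` and
its extensions by at most two vertices. -/
def IsHubLike (t : PlaneTree) : Prop :=
  ∃ bs, Reorder t (hub bs) ∨ Reorder t (graft (hub bs) single) ∨ ∃ pa, Reorder t (familyH pa bs)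

theorem IsHubLike.exists_reorder_familyH {t : PlaneTree} (h : t.IsHubLike) (hm : t.size % 3 = 0) :
    ∃ pa bs, Reorder t (familyH pa bs) := by
  obtain ⟨bs, h | h | ⟨pa, h⟩⟩ := h
  · rw [h.size_eq, size_hub] at hm; omega
  · rw [h.size_eq, size, size_hub, size] at hm; omega
  · exact ⟨pa, bs, h⟩

theorem IsHubLike.graft {t s : PlaneTree} (h : t.IsHubLike) (hs : s.size ≤ 3)
    (hcarry : (t.size - 1) % 3 + s.size % 3 < 3) : (graft t s).IsHubLike := by
  have hpos := s.size_pos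
  obtain hs | hs | hs : s.size = 1 ∨ s.size = 2 ∨ s.size = 3 := by omega
  · obtain rfl := eq_single hs
    obtain ⟨bs, h | h | ⟨pa, h⟩⟩ := h
    · exact ⟨bs, .inr (.inl (.congr _ h))⟩
    · exact ⟨bs, .inr (.inr ⟨false, .congr _ h⟩)⟩
    · rw [h.size_eq, size_familyH] at hcarry; omega
  · obtain rfl := eq_graft_single hs
    obtain ⟨bs, h | h | ⟨pa, h⟩⟩ := h
    · exact ⟨bs, .inr (.inr ⟨true, .congr _ h⟩)⟩
    · rw [h.size_eq, size, size_hub, size] at hcarry; omega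
    · rw [h.size_eq, size_familyH] at hcarry; omega
  · obtain ⟨b, rfl⟩ := eq_branch hs
    obtain ⟨bs, h | h | ⟨pa, h⟩⟩ := h
    · exact ⟨b :: bs, .inl (.congr _ h)⟩
    · exact ⟨b :: bs, .inr (.inl (.trans (.congr _ h) (.right_comm _ _ _)))⟩
    · exact ⟨b :: bs, .inr (.inr ⟨pa, .trans (.congr _ h) (reorder_graft_familyH_branch pa b bs)⟩)⟩

/-- The bounds on the number of maximum dissociation sets of a tree with at least three vertices, by
the residue of its order modulo `3`. -/
structure IsBounded (t : PlaneTree) : Prop where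
  mod_zero {k : ℕ} (hk : t.size = 3 * k + 3) :
    t.total ≤ 3 ^ k + 1 ∨ ∃ pa bs, Reroot t (familyH pa bs)
  mod_one {k : ℕ} (hk : t.size = 3 * k + 4) : t.total ≤ 3 ^ k + 1
  mod_two {k : ℕ} (hk : t.size = 3 * k + 5) : t.total ≤ 3 ^ k

theorem IsBounded.of_reroot {t s : PlaneTree} (h : Reroot t s) (hs : s.IsBounded) :
    t.IsBounded where
  mod_zero hk := by
    rw [h.total_eq]
    exact (hs.mod_zero (h.size_eq ▸ hk)).imp_right fun ⟨pa, bs, h'⟩ => ⟨pa, bs, h.trans h'⟩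
  mod_one hk := by rw [h.total_eq]; exact hs.mod_one (h.size_eq ▸ hk)
  mod_two hk := by rw [h.total_eq]; exact hs.mod_two (h.size_eq ▸ hk)

theorem isBounded_of_size_le_two {t : PlaneTree} (h : t.size ≤ 2) : t.IsBounded where
  mod_zero hk := by omega
  mod_one hk := by omega
  mod_two hk := by omega

theorem isBounded_of_total_le {t : PlaneTree} (hs : 4 ≤ t.size)
    (h : t.total ≤ threePow (t.size - 4)) : t.IsBounded where
  mod_zero {k} hk := .inl (h.trans ((threePow_le (by omega)).trans (Nat.le_succ (3 ^ k))))
  mod_one {k} hk := h.trans ((threePow_le (by omega)).trans (Nat.le_succ (3 ^ k)))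
  mod_two hk := h.trans (threePow_le (by omega))

namespace IsBounded

variable {t : PlaneTree} (h : t.IsBounded)
include h

theorem total_le_of_mod_zero {k : ℕ} (hk : t.size = 3 * k + 3) : t.total ≤ 3 ^ k + k + 2 := by
  rcases h.mod_zero hk with ht | ⟨pa, bs, ht⟩
  · omega
  · have hsize := ht.size_eq.symm.trans hk
    rw [size_familyH] at hsize
    obtain rfl : bs.length = k := by omega
    rw [ht.total_eq]
    exact total_familyH_le pa bs

theorem three_mul_total_le (hs : 4 ≤ t.size) : 3 * t.total ≤ 2 * threePow t.size := by
  obtain ⟨k, hk⟩ : ∃ k, t.size = 3 * k + 6 ∨ t.size = 3 * k + 4 ∨ t.size = 3 * k + 5 :=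
    ⟨(t.size - 4) / 3, by omega⟩
  have hlt : k < 3 ^ k := Nat.lt_pow_self (by norm_num)
  rcases hk with hk | hk | hk
  · have := h.total_le_of_mod_zero (k := k + 1) (by omega)
    have : 3 ^ (k + 1 + 1) ≤ threePow t.size := le_threePow (by omega)
    omega
  · have := h.mod_one hk
    have : 3 ^ (k + 1) ≤ threePow t.size := le_threePow (by omega)
    omega
  · have := h.mod_two hk
    have : 3 ^ (k + 1) ≤ threePow t.size := le_threePow (by omega)
    omega

theorem total_le_threePow : t.total ≤ threePow t.size := by
  have hpos := t.size_pos
  by_cases hs : 4 ≤ t.size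
  · have := h.three_mul_total_le hs; omega
  obtain hs | hs | hs : t.size = 1 ∨ t.size = 2 ∨ t.size = 3 := by omega
  · rw [eq_single hs]; decide
  · rw [eq_graft_single hs]; decide
  · obtain ⟨b, rfl⟩ := eq_branch hs
    cases b <;> decide

end IsBounded

theorem three_mul_out_le_or_isHubLike {t : PlaneTree}
    (h : ∀ s : PlaneTree, s.size < t.size → s.IsBounded) :
    3 * t.state.out ≤ 2 * threePow (t.size - 1) ∨ t.IsHubLike := by
  induction t with
  | single => exact .inr ⟨[], .inl (.refl _)⟩
  | graft t s ht _ =>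
    have htpos := t.size_pos
    have hspos := s.size_pos
    simp only [size] at h ⊢
    rw [out_graft, show t.size + s.size - 1 = t.size - 1 + s.size by omega]
    have hout : t.state.out ≤ threePow (t.size - 1) :=
      (out_le_threePow fun r hr => (h r (by omega)).total_le_threePow).trans
        (threePow_mono (Nat.sub_le _ _))
    have hs := h s (by omega)
    have htotal := hs.total_le_threePow
    have hmul := threePow_mul_le (t.size - 1) s.size
    by_cases hcarry : 3 ≤ (t.size - 1) % 3 + s.size % 3
    · have := three_mul_threePow_mul_le hcarry
      have := Nat.mul_le_mul hout htotal
      omega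
    by_cases h4 : 4 ≤ s.size
    · have := Nat.mul_le_mul hout (hs.three_mul_total_le h4)
      left
      linarith
    rcases ht fun r hr => h r (by omega) with ht | ht
    · have := Nat.mul_le_mul ht htotal
      left
      linarith
    · exact .inr (ht.graft (by omega) (by omega))

/-- The list of all plane trees with `n` vertices. -/
def ofSize : ℕ → List PlaneTree
  | 0 => []
  | 1 => [single]
  | n + 2 => (List.finRange (n + 1)).flatMap fun k : Fin (n + 1) =>
      (ofSize (n + 1 - k)).flatMap fun t => (ofSize (k + 1)).map (graft t)
decreasing_by all_goals omega

theorem mem_ofSize (t : PlaneTree) : t ∈ ofSize t.size := by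
  induction t with
  | single => rw [size, ofSize]; exact List.mem_singleton_self _
  | graft t s ht hs =>
    obtain ⟨a, ha⟩ := Nat.exists_eq_add_one.mpr t.size_pos
    obtain ⟨b, hb⟩ := Nat.exists_eq_add_one.mpr s.size_pos
    rw [size, ha, hb, show a + 1 + (b + 1) = a + b + 2 by omega, ofSize]
    simp only [List.mem_flatMap, List.mem_map]
    refine ⟨⟨b, by omega⟩, List.mem_finRange _, t, ?_, s, ?_, rfl⟩
    · rwa [show a + b + 1 - b = a + 1 by omega, ← ha]
    · rwa [← hb]

theorem total_add_le_of_mem_ofSize_six : ∀ t ∈ ofSize 6, t.state.kind = .neutral →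
    t.state.out < 3 → t.total + 2 * t.state.out + t.state.isolated ≤ 10 := by
  decide +kernel

theorem total_add_le_of_mem_ofSize_nine : ∀ t ∈ ofSize 9, t.state.kind = .neutral →
    t.state.out < 9 → t.total + 2 * t.state.out + t.state.isolated ≤ 28 := by
  decide +kernel

end PlaneTree

namespace RootState

variable {a b : RootState}

theorem total_graft_neutral (ha : a.kind = .neutral) (hb : b.kind = .neutral) :
    (a.graft b).total =
      a.out * b.total + (a.isolated + a.matched) * b.out + a.isolated * b.isolated := by
  obtain ⟨k, x, y, z⟩ := a
  obtain ⟨l, p, q, r⟩ := b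
  subst ha hb
  simp only [graft, total]
  ring

theorem total_graft_free (ha : a.kind = .neutral) (hb : b.kind = .free) :
    (a.graft b).total = a.out * b.total + a.isolated * b.isolated := by
  obtain ⟨k, x, y, z⟩ := a
  obtain ⟨l, p, q, r⟩ := b
  subst ha hb
  simp [graft, total]

theorem total_graft_paired (ha : a.kind = .neutral) (hb : b.kind = .paired) :
    (a.graft b).total = a.out * b.total := by
  obtain ⟨k, x, y, z⟩ := a
  obtain ⟨l, p, q, r⟩ := b
  subst ha hb
  simp [graft, total]

theorem isolated_le_total (hb : b.kind = .free) : b.isolated ≤ b.total := by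
  obtain ⟨l, p, q, r⟩ := b
  subst hb
  simp [total]

theorem out_add_isolated_le_total (hb : b.kind = .neutral) : b.out + b.isolated ≤ b.total := by
  obtain ⟨l, p, q, r⟩ := b
  subst hb
  simp [total]

end RootState

namespace PlaneTree

/-- All branches at the root have at most two vertices. -/
inductive HasShortBranches : PlaneTree → Prop
  | single : HasShortBranches single
  | graft {t s} : HasShortBranches t → s.size ≤ 2 → HasShortBranches (graft t s)

theorem HasShortBranches.eq_or_state_eq {t : PlaneTree} (h : t.HasShortBranches) :
    t.size ≤ 2 ∨ (∃ b, t = branch b) ∨ t.size = 4 ∧ t.state = ⟨.neutral, 1, 0, 1⟩ ∨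
      4 ≤ t.size ∧ t.state = ⟨.neutral, 1, 0, 0⟩ := by
  induction h with
  | single => simp [size]
  | @graft t s _ hs ih =>
    have hspos := s.size_pos
    have htpos := t.size_pos
    obtain hs | hs : s.size = 1 ∨ s.size = 2 := by omega
    · obtain rfl := eq_single hs
      rcases ih with ht | ⟨b, rfl⟩ | ⟨ht, hstate⟩ | ⟨ht, hstate⟩
      · obtain ht | ht : t.size = 1 ∨ t.size = 2 := by omega
        · obtain rfl := eq_single ht
          simp [size]
        · exact .inr (.inl (eq_branch (by rw [size, ht, hs])))
      · cases b <;> simp [branch, size, state, RootState.graft]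
      · simp [size, state, ht, hstate, RootState.graft]
      · simp [size, state, hstate, RootState.graft]; omega
    · obtain rfl := eq_graft_single hs
      rcases ih with ht | ⟨b, rfl⟩ | ⟨ht, hstate⟩ | ⟨ht, hstate⟩
      · obtain ht | ht : t.size = 1 ∨ t.size = 2 := by omega
        · exact .inr (.inl (eq_branch (by rw [size, ht, hs])))
        · obtain rfl := eq_graft_single ht
          simp [branch, size, state, RootState.graft]
      · cases b <;> simp [branch, size, state, RootState.graft]
      · simp [size, state, ht, hstate, RootState.graft]
      · simp [size, state, hstate, RootState.graft]; omega

theorem hasShortBranches_or_exists_reorder (t : PlaneTree) :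
    t.HasShortBranches ∨ ∃ r s, Reorder t (graft r s) ∧ 3 ≤ s.size := by
  induction t with
  | single => exact .inl .single
  | graft t s ht _ =>
    by_cases h3 : 3 ≤ s.size
    · exact .inr ⟨t, s, .refl _, h3⟩
    rcases ht with ht | ⟨r, s', h, hs'⟩
    · exact .inl (.graft ht (by omega))
    · exact .inr ⟨graft r s, s', .trans (.congr s h) (.right_comm _ _ _), hs'⟩

/-- As long as the first part has a branch with at least three vertices, this branch can be made the
first part instead. -/
theorem exists_reroot_graft_hasShortBranches (t s : PlaneTree) (ht : 3 ≤ t.size) :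
    ∃ t' s', Reroot (graft t s) (graft t' s') ∧ t'.HasShortBranches ∧ 3 ≤ t'.size := by
  induction hn : t.size using Nat.strong_induction_on generalizing t s with
  | _ n ih =>
    rcases t.hasShortBranches_or_exists_reorder with h | ⟨r, u, h, hu⟩
    · exact ⟨t, s, .of_reorder (.refl _), h, ht⟩
    · have hsize := h.size_eq
      have hpos := r.size_pos
      rw [size] at hsize
      obtain ⟨t', s', h', hshort⟩ := ih u.size (by omega) u (graft r s) hu rfl
      exact ⟨t', s', .trans (.of_reorder (.trans (.congr s h) (.right_comm _ _ _)))
        (.trans (.swap _ _) h'), hshort⟩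

theorem hasShortBranches_or_exists_reroot (t : PlaneTree) :
    t.HasShortBranches ∨
      ∃ t' s', Reroot t (graft t' s') ∧ t'.HasShortBranches ∧ 3 ≤ t'.size := by
  rcases t.hasShortBranches_or_exists_reorder with h | ⟨r, s, h, hs⟩
  · exact .inl h
  · obtain ⟨t', s', h', hshort⟩ := exists_reroot_graft_hasShortBranches s r hs
    exact .inr ⟨t', s', .trans (.of_reorder h) (.trans (.swap _ _) h'), hshort⟩

theorem HasShortBranches.isBounded {t : PlaneTree} (h : t.HasShortBranches) : t.IsBounded := by
  rcases h.eq_or_state_eq with h | ⟨b, rfl⟩ | ⟨hsize, hstate⟩ | ⟨hsize, hstate⟩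
  · exact isBounded_of_size_le_two h
  · have hsize := size_branch b
    refine ⟨fun _ => .inr ⟨b, [], ?_⟩, fun hk => by omega, fun hk => by omega⟩
    cases b <;> exact .of_reorder (.refl _)
  · have htotal : t.total = 2 := by rw [total, hstate, RootState.total]
    refine ⟨fun hk => by omega, fun {k} _ => ?_, fun hk => by omega⟩
    have : 0 < 3 ^ k := by positivity
    omega
  · refine isBounded_of_total_le hsize ?_
    rw [total, hstate, RootState.total]
    exact Nat.one_le_pow _ _ (by norm_num)

section Graft

variable {t s : PlaneTree}

theorem isBounded_graft_of_state_eq_zero (hs : s.IsBounded) (ht : 4 ≤ t.size)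
    (hstate : t.state = ⟨.neutral, 1, 0, 0⟩) : (graft t s).IsBounded := by
  refine isBounded_of_total_le (by rw [size]; omega) ?_
  have htotal : (graft t s).total = s.total := by
    rw [total, total, state, hstate]
    cases hk : s.state.kind
    · simp [RootState.total_graft_neutral, hk]
    · simp [RootState.total_graft_free, hk]
    · simp [RootState.total_graft_paired, hk]
  rw [htotal, size]
  exact hs.total_le_threePow.trans (threePow_mono (by omega))

theorem isBounded_graft_of_state_eq_one (hs : ∀ r : PlaneTree, r.size ≤ s.size → r.IsBounded)
    (ht : t.size = 4) (hstate : t.state = ⟨.neutral, 1, 0, 1⟩) : (graft t s).IsBounded := by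
  have hbound := hs s le_rfl
  have hsize : (graft t s).size = s.size + 4 := by rw [size, ht, Nat.add_comm]
  by_cases hneutral : s.state.kind = .neutral
  swap
  · refine isBounded_of_total_le (by omega) ?_
    have htotal : (graft t s).total = s.total := by
      rw [total, total, state, hstate]
      cases hk : s.state.kind
      · exact absurd hk hneutral
      · simp [RootState.total_graft_free, hk]
      · simp [RootState.total_graft_paired, hk]
    rw [htotal, hsize]
    exact hbound.total_le_threePow
  have htotal : (graft t s).total = s.total + s.state.out := by
    rw [total, total, state, hstate]
    simp [RootState.total_graft_neutral, hneutral]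
  have hthree := three_le_size hneutral
  have hout := out_le_threePow fun r hr => (hs r hr.le).total_le_threePow
  have hout' : ∀ j, s.size < 3 * j + 6 → s.state.out ≤ 3 ^ j := fun j hj =>
    hout.trans (threePow_le (by rw [hneutral, RootKind.rank]; omega))
  refine ⟨fun {k} hk => .inl ?_, fun {k} hk => ?_, fun {k} hk => ?_⟩
  · obtain ⟨j, rfl⟩ : ∃ j, k = j + 1 + 1 := ⟨k - 2, by omega⟩
    have := hbound.mod_two (k := j) (by omega)
    have := hout' j (by omega)
    have : 0 < 3 ^ j := by positivity
    omega
  · obtain ⟨j, rfl⟩ : ∃ j, k = j + 1 := ⟨k - 1, by omega⟩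
    have := hbound.total_le_of_mod_zero (k := j) (by omega)
    have := hout' j (by omega)
    have : j < 3 ^ j := Nat.lt_pow_self (by norm_num)
    omega
  · obtain ⟨j, rfl⟩ : ∃ j, k = j + 1 := ⟨k - 1, by omega⟩
    have := hbound.mod_one (k := j) (by omega)
    have := hout' j (by omega)
    have : 0 < 3 ^ j := by positivity
    omega

theorem total_graft_branch_le_of_neutral (b : Bool) (hs : s.state.kind = .neutral) :
    (graft (branch b) s).total ≤ s.total + 2 * s.state.out + s.state.isolated := by
  cases b <;> rw [total, state, RootState.total_graft_neutral rfl hs] <;>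
    simp [branch, state, RootState.graft, total]

theorem total_graft_branch_le_of_free (b : Bool) (hs : s.state.kind = .free) :
    (graft (branch b) s).total ≤ s.total + s.state.isolated := by
  cases b <;> rw [total, state, RootState.total_graft_free rfl hs] <;>
    simp [branch, state, RootState.graft, total]

theorem total_graft_branch_of_paired (b : Bool) (hs : s.state.kind = .paired) :
    (graft (branch b) s).total = s.total := by
  cases b <;> rw [total, state, RootState.total_graft_paired rfl hs] <;>
    simp [branch, state, RootState.graft, total]

theorem two_mul_add_four_le_three_pow {n : ℕ} (hn : 2 ≤ n) : 2 * n + 4 ≤ 3 ^ n := by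
  induction n, hn using Nat.le_induction with
  | base => norm_num
  | succ n _ ih => rw [pow_succ]; omega

/-- Neutral roots outside `ℋ` satisfy `3 * out ≤ 2 * 3 ^ j`, which gives the bound for `3 ≤ j`; for
`j = 1` and `j = 2` it is checked on all plane trees. -/
theorem total_add_le_or_exists_reorder_familyH
    (hs : ∀ r : PlaneTree, r.size ≤ s.size → r.IsBounded) (hneutral : s.state.kind = .neutral)
    {j : ℕ} (hj : s.size = 3 * j + 3) :
    s.total + 2 * s.state.out + s.state.isolated ≤ 3 ^ (j + 1) + 1 ∨
      ∃ pa bs, Reorder s (familyH pa bs) := by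
  rcases three_mul_out_le_or_isHubLike fun r hr => hs r hr.le with hout | hhub
  swap
  · exact .inr (hhub.exists_reorder_familyH (by omega))
  have hout' : 3 * s.state.out ≤ 2 * 3 ^ j :=
    hout.trans (Nat.mul_le_mul_left 2 (threePow_le (by omega)))
  have hpos := s.isPositive_state.out_pos
  have htotal := (hs s le_rfl).total_le_of_mod_zero hj
  have hmem := s.mem_ofSize
  rw [hj] at hmem
  left
  obtain rfl | rfl | rfl | hj3 : j = 0 ∨ j = 1 ∨ j = 2 ∨ 3 ≤ j := by omega
  · omega
  · exact total_add_le_of_mem_ofSize_six s hmem hneutral (by omega)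
  · exact total_add_le_of_mem_ofSize_nine s hmem hneutral (by omega)
  · obtain ⟨i, rfl⟩ : ∃ i, j = i + 1 := ⟨j - 1, by omega⟩
    have := two_mul_add_four_le_three_pow (n := i) (by omega)
    rcases Nat.eq_zero_or_pos s.state.isolated with hzero | hisolated
    · omega
    · have := s.isPositive_state.out_add_isolated_lt_total hneutral hisolated
      rw [← total] at this
      omega

theorem isBounded_graft_branch_of_neutral (b : Bool)
    (hs : ∀ r : PlaneTree, r.size ≤ s.size → r.IsBounded) (hneutral : s.state.kind = .neutral) :
    (graft (branch b) s).IsBounded := by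
  have hbound := hs s le_rfl
  have hsize : (graft (branch b) s).size = s.size + 3 := by rw [size, size_branch, Nat.add_comm]
  have hthree := three_le_size hneutral
  have htotal := total_graft_branch_le_of_neutral b hneutral
  have hsum : s.state.out + s.state.isolated ≤ s.total :=
    RootState.out_add_isolated_le_total hneutral
  have hlt := s.isPositive_state.out_add_isolated_lt_total hneutral
  rw [← total] at hlt
  have hout : ∀ j, s.size < 3 * j + 6 → s.state.out ≤ 3 ^ j := fun j hj =>
    (out_le_threePow fun r hr => (hs r hr.le).total_le_threePow).trans
      (threePow_le (by rw [hneutral, RootKind.rank]; omega))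
  refine ⟨fun {k} hk => ?_, fun {k} hk => ?_, fun {k} hk => ?_⟩ <;>
    obtain ⟨j, rfl⟩ : ∃ j, k = j + 1 := ⟨k - 1, by omega⟩
  · rcases total_add_le_or_exists_reorder_familyH hs hneutral (j := j) (by omega) with
      h | ⟨pa, bs, h⟩
    · exact .inl (htotal.trans h)
    · exact .inr ⟨pa, b :: bs, .trans (.swap _ _)
        (.of_reorder (.trans (.congr _ h) (reorder_graft_familyH_branch pa b bs)))⟩
  · have := hbound.mod_one (k := j) (by omega)
    have := hout j (by omega)
    omega
  · have := hbound.mod_two (k := j) (by omega)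
    have := hout j (by omega)
    omega

theorem isBounded_graft_branch_of_free (b : Bool)
    (hs : ∀ r : PlaneTree, r.size ≤ s.size → r.IsBounded) (hfree : s.state.kind = .free) :
    (graft (branch b) s).IsBounded := by
  have hbound := hs s le_rfl
  have hsize : (graft (branch b) s).size = s.size + 3 := by rw [size, size_branch, Nat.add_comm]
  have htotal : (graft (branch b) s).total ≤ 2 * s.total := by
    have := total_graft_branch_le_of_free b hfree
    have : s.state.isolated ≤ s.total := RootState.isolated_le_total hfree
    omega
  have hpos := s.size_pos
  refine ⟨fun {k} hk => .inl ?_, fun {k} hk => ?_, fun {k} hk => ?_⟩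
  · have hdeficit := total_le_threePow_sub_deficit fun r hr => (hs r hr).total_le_threePow
    rw [hfree, RootKind.deficit] at hdeficit
    have : s.size ≠ 0 := hpos.ne'
    obtain ⟨j, rfl⟩ : ∃ j, k = j + 1 := ⟨k - 1, by omega⟩
    have : threePow (s.size - 1) ≤ 3 ^ j := threePow_le (by omega)
    omega
  · obtain rfl | ⟨j, rfl⟩ : k = 0 ∨ ∃ j, k = j + 1 := by cases k <;> simp
    · have := hbound.total_le_threePow
      have : threePow s.size ≤ 3 ^ 0 := threePow_le (by omega)
      omega
    · have := hbound.mod_one (k := j) (by omega)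
      have : 0 < 3 ^ j := by positivity
      omega
  · obtain rfl | ⟨j, rfl⟩ : k = 0 ∨ ∃ j, k = j + 1 := by cases k <;> simp
    · rw [eq_graft_single (t := s) (by omega)] at hfree
      cases hfree
    · have := hbound.mod_two (k := j) (by omega)
      omega

theorem isBounded_graft_branch_of_paired (b : Bool)
    (hs : ∀ r : PlaneTree, r.size ≤ s.size → r.IsBounded) (hpaired : s.state.kind = .paired) :
    (graft (branch b) s).IsBounded := by
  have hpos := s.size_pos
  have hdeficit := total_le_threePow_sub_deficit fun r hr => (hs r hr).total_le_threePow
  rw [hpaired, RootKind.deficit] at hdeficit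
  refine isBounded_of_total_le (by rw [size, size_branch]; omega) ?_
  rw [total_graft_branch_of_paired b hpaired, size, size_branch]
  exact hdeficit.trans (threePow_mono (by omega))

end Graft

theorem isBounded (t : PlaneTree) : t.IsBounded := by
  induction hn : t.size using Nat.strong_induction_on generalizing t with
  | _ n ih =>
    rcases t.hasShortBranches_or_exists_reroot with h | ⟨r, s, h, hshort, hr⟩
    · exact h.isBounded
    have hsize : t.size = r.size + s.size := h.size_eq
    have hs : ∀ u : PlaneTree, u.size ≤ s.size → u.IsBounded :=
      fun u hu => ih u.size (by omega) u rfl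
    refine .of_reroot h ?_
    rcases hshort.eq_or_state_eq with hr' | ⟨b, rfl⟩ | ⟨hr', hstate⟩ | ⟨hr', hstate⟩
    · omega
    · cases hk : s.state.kind
      · exact isBounded_graft_branch_of_neutral b hs hk
      · exact isBounded_graft_branch_of_free b hs hk
      · exact isBounded_graft_branch_of_paired b hs hk
    · exact isBounded_graft_of_state_eq_one hs hr' hstate
    · exact isBounded_graft_of_state_eq_zero (hs s le_rfl) hr' hstate

end PlaneTree

/-! ### Building a tree edge by edge -/

/-- `A` and `B` are disjoint sets of vertices joined by the edge `ru` of `G` and by no other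
edge. -/
structure SingleEdge (G : SimpleGraph V) (A B : Finset V) (r u : V) : Prop where
  disjoint : Disjoint A B
  left_mem : r ∈ A
  right_mem : u ∈ B
  adj_iff : ∀ a ∈ A, ∀ b ∈ B, (G.Adj a b ↔ a = r ∧ b = u)

namespace SingleEdge

variable {G : SimpleGraph V} {A B C : Finset V} {r u v : V}

theorem adj (h : SingleEdge G A B r u) : G.Adj r u :=
  (h.adj_iff r h.left_mem u h.right_mem).2 ⟨rfl, rfl⟩

theorem symm (h : SingleEdge G A B r u) : SingleEdge G B A u r :=
  ⟨h.disjoint.symm, h.right_mem, h.left_mem, fun b hb a ha => by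
    rw [G.adj_comm, h.adj_iff a ha b hb, and_comm]⟩

theorem union_left (h : SingleEdge G A C r u) (hd : Disjoint B C)
    (hB : ∀ b ∈ B, ∀ c ∈ C, ¬G.Adj b c) : SingleEdge G (A ∪ B) C r u where
  disjoint := Finset.disjoint_union_left.2 ⟨h.disjoint, hd⟩
  left_mem := Finset.mem_union_left _ h.left_mem
  right_mem := h.right_mem
  adj_iff a ha c hc := by
    refine ⟨fun hac => ?_, fun hac => hac.1 ▸ hac.2 ▸ h.adj⟩
    obtain ha | ha := Finset.mem_union.1 ha
    · exact (h.adj_iff a ha c hc).1 hac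
    · exact absurd hac (hB a ha c hc)

theorem of_union_left (h : SingleEdge G (A ∪ B) C r u) (hr : r ∈ A) : SingleEdge G A C r u where
  disjoint := h.disjoint.mono_left Finset.subset_union_left
  left_mem := hr
  right_mem := h.right_mem
  adj_iff a ha := h.adj_iff a (Finset.mem_union_left _ ha)

theorem union_left_of_branches (hB : SingleEdge G A B r u) (hC : SingleEdge G (A ∪ B) C r v) :
    SingleEdge G (A ∪ C) B r u := by
  refine hB.union_left (hC.disjoint.mono_left Finset.subset_union_right).symm
    fun c hc b hb hcb => ?_
  obtain rfl := ((hC.adj_iff b (Finset.mem_union_right _ hb) c hc).1 hcb.symm).1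
  exact Finset.disjoint_left.1 hB.disjoint hB.left_mem hb

end SingleEdge

/-- `Realizes G A r t` means that the subgraph of `G` induced by `A`, rooted at `r`, is a tree of
the shape prescribed by `t`. -/
inductive Realizes (G : SimpleGraph V) : Finset V → V → PlaneTree → Prop
  | single (r : V) : Realizes G {r} r .single
  | graft {A B : Finset V} {r u : V} {t s : PlaneTree} :
      Realizes G A r t → Realizes G B u s → SingleEdge G A B r u → Realizes G (A ∪ B) r (.graft t s)

namespace Realizes

variable {G : SimpleGraph V} {A : Finset V} {r : V} {t s : PlaneTree}

theorem root_mem (h : Realizes G A r t) : r ∈ A := by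
  induction h with
  | single r => exact Finset.mem_singleton_self r
  | graft _ _ hAB => exact Finset.mem_union_left _ hAB.left_mem

theorem card_eq (h : Realizes G A r t) : A.card = t.size := by
  induction h with
  | single r => rfl
  | graft _ _ hAB ht hs => rw [Finset.card_union_of_disjoint hAB.disjoint, ht, hs, PlaneTree.size]

theorem reorder (hts : t.Reorder s) (h : Realizes G A r t) : Realizes G A r s := by
  induction hts generalizing A with
  | refl => exact h
  | trans _ _ ih₁ ih₂ => exact ih₂ (ih₁ h)
  | congr _ _ ih => cases h with | graft ht hs hAB => exact (ih ht).graft hs hAB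
  | right_comm =>
    cases h with
    | graft h hr hC =>
      cases h with
      | graft ht hs hB =>
        rw [Finset.union_right_comm]
        exact (ht.graft hr (hC.of_union_left hB.left_mem)).graft hs (hB.union_left_of_branches hC)

theorem reroot (hts : t.Reroot s) (h : Realizes G A r t) : ∃ u, Realizes G A u s := by
  induction hts generalizing r with
  | of_reorder hts => exact ⟨r, h.reorder hts⟩
  | swap =>
    cases h with
    | graft ht hs hAB =>
      rw [Finset.union_comm]
      exact ⟨_, hs.graft ht hAB.symm⟩
  | trans _ _ ih₁ ih₂ =>
    obtain ⟨u, hu⟩ := ih₁ h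
    exact ih₂ hu

theorem graft_single (h : Realizes G A r t) {v : V} (hv : v ∉ A)
    (hadj : ∀ a ∈ A, (G.Adj a v ↔ a = r)) :
    Realizes G (A ∪ {v}) r (t.graft .single) :=
  h.graft (.single v)
    { disjoint := Finset.disjoint_singleton_right.2 hv
      left_mem := h.root_mem
      right_mem := Finset.mem_singleton_self v
      adj_iff := fun a ha b hb => by
        obtain rfl := Finset.mem_singleton.1 hb
        rw [hadj a ha, and_iff_left rfl] }

theorem exists_union_singleton (h : Realizes G A r t) {v a : V} (hv : v ∉ A) (ha : a ∈ A)
    (hav : ∀ b ∈ A, (G.Adj v b ↔ b = a)) : ∃ t', Realizes G (A ∪ {v}) r t' := by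
  induction h with
  | single r =>
    obtain rfl := Finset.mem_singleton.1 ha
    exact ⟨_, (single a).graft_single hv fun b hb => (G.adj_comm b v).trans (hav b hb)⟩
  | @graft A B r u t s ht hs hAB iht ihs =>
    simp only [Finset.mem_union, not_or] at hv hav
    obtain ha | ha := Finset.mem_union.1 ha
    · have hvB : ∀ b ∈ B, ¬G.Adj v b := fun b hb hvb =>
        Finset.disjoint_left.1 hAB.disjoint ha ((hav b (.inr hb)).1 hvb ▸ hb)
      obtain ⟨t', ht'⟩ := iht hv.1 ha fun b hb => hav b (.inl hb)
      rw [Finset.union_right_comm]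
      exact ⟨_, ht'.graft hs <| hAB.union_left (Finset.disjoint_singleton_left.2 hv.2) <| by
        simpa using hvB⟩
    · have hvA : ∀ b ∈ A, ¬G.Adj v b := fun b hb hvb =>
        Finset.disjoint_left.1 hAB.disjoint hb ((hav b (.inl hb)).1 hvb ▸ ha)
      obtain ⟨s', hs'⟩ := ihs hv.2 ha fun b hb => hav b (.inr hb)
      rw [Finset.union_assoc]
      refine ⟨_, ht.graft hs' (SingleEdge.symm ?_)⟩
      exact hAB.symm.union_left (Finset.disjoint_singleton_left.2 hv.1) (by simpa using hvA)

theorem connected_induce (h : Realizes G A r t) : (G.induce (A : Set V)).Connected := by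
  induction h with
  | single r =>
    rw [Finset.coe_singleton]
    exact SimpleGraph.Connected.of_subsingleton
  | graft _ _ hAB ht hs =>
    rw [Finset.coe_union]
    exact SimpleGraph.connected_induce_union ht.preconnected hs.preconnected hAB.left_mem
      hAB.right_mem hAB.adj

end Realizes

theorem eq_of_adj_of_connected_induce {G : SimpleGraph V} (hG : G.IsAcyclic) {A : Set V}
    (hA : (G.induce A).Connected) {a b v : V} (ha : a ∈ A) (hb : b ∈ A) (hv : v ∉ A)
    (hav : G.Adj a v) (hbv : G.Adj b v) : a = b := by
  by_contra hab
  let f : G.induce A →g G.deleteEdges {s(a, v)} :=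
    ⟨Subtype.val, fun {x y} hxy => by
      have hx : (x : V) ≠ v := fun h => hv (h ▸ x.2)
      have hy : (y : V) ≠ v := fun h => hv (h ▸ y.2)
      simp_all [SimpleGraph.deleteEdges_adj]⟩
  have hab' : (G.deleteEdges {s(a, v)}).Reachable a b :=
    (hA.preconnected ⟨a, ha⟩ ⟨b, hb⟩).map f
  have hbv' : (G.deleteEdges {s(a, v)}).Adj b v := by
    simp_all [SimpleGraph.deleteEdges_adj, eq_comm, hbv.ne]
  exact SimpleGraph.isBridge_iff.1 (SimpleGraph.isAcyclic_iff_forall_adj_isBridge.1 hG hav)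
    (hab'.trans hbv'.reachable)

theorem exists_realizes_univ [Fintype V] {G : SimpleGraph V} (hG : G.IsTree) :
    ∃ r t, Realizes G Finset.univ r t := by
  obtain ⟨r⟩ := hG.connected.nonempty
  obtain ⟨A, -, hA⟩ := Finite.exists_le_maximal (p := fun A => ∃ t, Realizes G A r t)
    ⟨_, Realizes.single r⟩
  obtain ⟨t, ht⟩ := hA.prop
  suffices A = Finset.univ from ⟨r, t, this ▸ ht⟩
  by_contra hne
  obtain ⟨x, hx⟩ : ∃ x, x ∉ A := by simpa [Finset.eq_univ_iff_forall] using hne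
  obtain ⟨p⟩ := hG.connected.preconnected r x
  obtain ⟨⟨⟨a, v⟩, hav⟩, -, ha, hv⟩ := p.exists_boundary_dart (A : Set V) ht.root_mem hx
  have hva (b) (hb : b ∈ A) : G.Adj v b ↔ b = a :=
    ⟨fun h => eq_of_adj_of_connected_induce hG.isAcyclic ht.connected_induce hb ha hv h.symm hav,
      fun h => h ▸ hav.symm⟩
  obtain ⟨t', ht'⟩ := ht.exists_union_singleton hv ha hva
  exact hv (hA.le_of_ge ⟨t', ht'⟩ Finset.subset_union_left (by simp))

/-! ### Counting dissociation sets -/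

theorem nbrCount_eq_card_filter (G : SimpleGraph V) (s : Finset V) (v : V) :
    nbrCount G s v = (s.filter (G.Adj v)).card := by
  rw [nbrCount, ← Set.ncard_coe_finset]
  simp

theorem nbrCount_union (G : SimpleGraph V) {s t : Finset V} (h : Disjoint s t) (v : V) :
    nbrCount G (s ∪ t) v = nbrCount G s v + nbrCount G t v := by
  simp only [nbrCount_eq_card_filter, Finset.filter_union]
  exact Finset.card_union_of_disjoint (Finset.disjoint_filter_filter h)

section Splitting

variable {A B s : Finset V}

theorem inter_union_inter_of_subset (hs : s ⊆ A ∪ B) : s ∩ A ∪ s ∩ B = s := by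
  rw [← Finset.inter_union_distrib_left, Finset.inter_eq_left.2 hs]

theorem union_inter_left_of_subset {t : Finset V} (hAB : Disjoint A B) (hs : s ⊆ A) (ht : t ⊆ B) :
    (s ∪ t) ∩ A = s := by
  rw [Finset.union_inter_distrib_right, Finset.inter_eq_left.2 hs,
    Finset.disjoint_iff_inter_eq_empty.1 (hAB.symm.mono_left ht), Finset.union_empty]

end Splitting

namespace SingleEdge

variable {G : SimpleGraph V} {A B s : Finset V} {r u : V}

theorem nbrCount_of_mem_left (h : SingleEdge G A B r u) (hs : s ⊆ A ∪ B) {v : V} (hv : v ∈ A) :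
    nbrCount G s v = nbrCount G (s ∩ A) v + if v = r ∧ u ∈ s then 1 else 0 := by
  have hd : Disjoint (s ∩ A) (s ∩ B) :=
    h.disjoint.mono Finset.inter_subset_right Finset.inter_subset_right
  conv_lhs => rw [← inter_union_inter_of_subset hs, nbrCount_union G hd]
  congr 1
  have hB : (s ∩ B).filter (G.Adj v) = if v = r ∧ u ∈ s then {u} else ∅ := by
    ext w
    have := h.right_mem
    have := h.adj_iff v hv w
    split_ifs <;> simp only [Finset.mem_filter, Finset.mem_inter, Finset.mem_singleton] <;> grind
  rw [nbrCount_eq_card_filter, hB]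
  split_ifs <;> rfl

theorem forall_nbrCount_le_one_iff (h : SingleEdge G A B r u) (hs : s ⊆ A ∪ B) :
    (∀ v ∈ s, v ∈ A → nbrCount G s v ≤ 1) ↔
      IsDissoc G (s ∩ A) ∧ (r ∈ s → u ∈ s → nbrCount G (s ∩ A) r = 0) := by
  have hr := h.left_mem
  have key (v) (hv : v ∈ A) := h.nbrCount_of_mem_left hs hv
  simp only [IsDissoc, Finset.mem_inter, and_imp]
  refine ⟨fun hle => ⟨fun v hvs hv => ?_, fun hrs hus => ?_⟩, fun ⟨hle, _⟩ v hvs hv => ?_⟩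
  · have := hle v hvs hv
    grind
  · have := hle r hrs hr
    grind
  · have := hle v hvs hv
    grind

theorem isDissoc_iff (h : SingleEdge G A B r u) (hs : s ⊆ A ∪ B) :
    IsDissoc G s ↔ (IsDissoc G (s ∩ A) ∧ IsDissoc G (s ∩ B)) ∧
      (r ∈ s → u ∈ s → nbrCount G (s ∩ A) r = 0 ∧ nbrCount G (s ∩ B) u = 0) := by
  have hA := h.forall_nbrCount_le_one_iff hs
  have hB := h.symm.forall_nbrCount_le_one_iff (s := s) (by rwa [Finset.union_comm])
  have hAB : IsDissoc G s ↔
      (∀ v ∈ s, v ∈ A → nbrCount G s v ≤ 1) ∧ ∀ v ∈ s, v ∈ B → nbrCount G s v ≤ 1 := by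
    refine ⟨fun h => ⟨fun v hv _ => h v hv, fun v hv _ => h v hv⟩, fun h v hv => ?_⟩
    exact (Finset.mem_union.1 (hs hv)).elim (h.1 v hv) (h.2 v hv)
  rw [hAB, hA, hB]
  tauto

end SingleEdge

/-- The dissociation sets of `G` contained in `A`. -/
noncomputable def dissocSets (G : SimpleGraph V) (A : Finset V) : Finset (Finset V) :=
  A.powerset.filter (IsDissoc G)

/-- The dissociation sets of `G` contained in `A` and avoiding `r`. -/
noncomputable def outSets (G : SimpleGraph V) (A : Finset V) (r : V) : Finset (Finset V) :=
  A.powerset.filter fun s => IsDissoc G s ∧ r ∉ s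

/-- The dissociation sets of `G` contained in `A` of which `r` is an isolated vertex. -/
noncomputable def isolatedSets (G : SimpleGraph V) (A : Finset V) (r : V) : Finset (Finset V) :=
  A.powerset.filter fun s => IsDissoc G s ∧ r ∈ s ∧ nbrCount G s r = 0

/-- The dissociation sets of `G` contained in `A` of which `r` is a vertex of degree one. -/
noncomputable def matchedSets (G : SimpleGraph V) (A : Finset V) (r : V) : Finset (Finset V) :=
  A.powerset.filter fun s => IsDissoc G s ∧ r ∈ s ∧ nbrCount G s r = 1

section Singleton

variable (G : SimpleGraph V) (r : V)

theorem nbrCount_singleton_self : nbrCount G {r} r = 0 := by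
  simp [nbrCount_eq_card_filter, Finset.filter_singleton]

theorem outSets_singleton : outSets G {r} r = {∅} := by
  ext s
  simp only [outSets, Finset.mem_filter, Finset.mem_powerset, Finset.subset_singleton_iff,
    Finset.mem_singleton]
  constructor
  · rintro ⟨rfl | rfl, -, hr⟩
    · rfl
    · exact absurd (Finset.mem_singleton_self r) hr
  · rintro rfl
    simp [IsDissoc]

theorem isolatedSets_singleton : isolatedSets G {r} r = {{r}} := by
  ext s
  simp only [isolatedSets, Finset.mem_filter, Finset.mem_powerset, Finset.subset_singleton_iff,
    Finset.mem_singleton]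
  constructor
  · rintro ⟨rfl | rfl, -, hr, -⟩
    · exact absurd hr (Finset.notMem_empty r)
    · rfl
  · rintro rfl
    simp [IsDissoc, nbrCount_singleton_self]

theorem matchedSets_singleton : matchedSets G {r} r = ∅ := by
  refine Finset.filter_eq_empty_iff.2 fun s hs ⟨_, hr, hone⟩ => ?_
  obtain rfl | rfl := Finset.subset_singleton_iff.1 (Finset.mem_powerset.1 hs)
  · exact absurd hr (Finset.notMem_empty r)
  · simp [nbrCount_singleton_self] at hone

end Singleton

/-- The subsets of `A ∪ B` that trace a member of `S` on `A` and a member of `T` on `B`. -/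
noncomputable def glue (A B : Finset V) (S T : Finset (Finset V)) : Finset (Finset V) :=
  (A ∪ B).powerset.filter fun s => s ∩ A ∈ S ∧ s ∩ B ∈ T

namespace SingleEdge

variable {G : SimpleGraph V} {A B : Finset V} {r u : V}

theorem outSets_union (h : SingleEdge G A B r u) :
    outSets G (A ∪ B) r = glue A B (outSets G A r) (dissocSets G B) := by
  ext s
  simp only [outSets, dissocSets, glue, Finset.mem_filter, Finset.mem_powerset]
  refine and_congr_right fun hs => ?_
  have := h.left_mem
  simp only [h.isDissoc_iff hs, Finset.mem_inter, Finset.inter_subset_right, true_and]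
  tauto

theorem isolatedSets_union (h : SingleEdge G A B r u) :
    isolatedSets G (A ∪ B) r = glue A B (isolatedSets G A r) (outSets G B u) := by
  ext s
  simp only [isolatedSets, outSets, glue, Finset.mem_filter, Finset.mem_powerset]
  refine and_congr_right fun hs => ?_
  have := h.left_mem
  have := h.right_mem
  simp only [h.isDissoc_iff hs, h.nbrCount_of_mem_left hs h.left_mem, Finset.mem_inter,
    Finset.inter_subset_right, true_and]
  grind

theorem matchedSets_union (h : SingleEdge G A B r u) :
    matchedSets G (A ∪ B) r = glue A B (matchedSets G A r) (outSets G B u) ∪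
      glue A B (isolatedSets G A r) (isolatedSets G B u) := by
  ext s
  simp only [matchedSets, isolatedSets, outSets, glue, Finset.mem_filter, Finset.mem_powerset,
    Finset.mem_union, ← and_or_left]
  refine and_congr_right fun hs => ?_
  have := h.left_mem
  have := h.right_mem
  simp only [h.isDissoc_iff hs, h.nbrCount_of_mem_left hs h.left_mem, Finset.mem_inter,
    Finset.inter_subset_right, true_and]
  grind

end SingleEdge

section Polynomial

open Polynomial

/-- The generating polynomial of a family of finite sets by cardinality. -/
noncomputable def sizePoly (S : Finset (Finset V)) : ℕ[X] := ∑ s ∈ S, X ^ s.card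

theorem coeff_sizePoly (S : Finset (Finset V)) (d : ℕ) :
    (sizePoly S).coeff d = (S.filter fun s => s.card = d).card := by
  simp [sizePoly, coeff_X_pow, eq_comm]

theorem sizePoly_union {S T : Finset (Finset V)} (h : Disjoint S T) :
    sizePoly (S ∪ T) = sizePoly S + sizePoly T :=
  Finset.sum_union h

theorem sizePoly_glue {A B : Finset V} {S T : Finset (Finset V)} (hAB : Disjoint A B)
    (hS : S ⊆ A.powerset) (hT : T ⊆ B.powerset) :
    sizePoly (glue A B S T) = sizePoly S * sizePoly T := by
  have hST (s) (hs : s ∈ S) (t) (ht : t ∈ T) : (s ∪ t) ∩ A = s ∧ (s ∪ t) ∩ B = t := by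
    have hsA := Finset.mem_powerset.1 (hS hs)
    have htB := Finset.mem_powerset.1 (hT ht)
    exact ⟨union_inter_left_of_subset hAB hsA htB,
      Finset.union_comm s t ▸ union_inter_left_of_subset hAB.symm htB hsA⟩
  simp only [sizePoly, Finset.sum_mul_sum, ← Finset.sum_product']
  refine Finset.sum_nbij' (fun s => (s ∩ A, s ∩ B)) (fun p => p.1 ∪ p.2) ?_ ?_ ?_ ?_ ?_
  · intro s hs
    exact Finset.mem_product.2 (Finset.mem_filter.1 hs).2
  · rintro ⟨s, t⟩ hst
    obtain ⟨hs, ht⟩ := Finset.mem_product.1 hst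
    refine Finset.mem_filter.2 ⟨Finset.mem_powerset.2 ?_, ?_⟩
    · exact Finset.union_subset_union (Finset.mem_powerset.1 (hS hs))
        (Finset.mem_powerset.1 (hT ht))
    · rw [(hST s hs t ht).1, (hST s hs t ht).2]
      exact ⟨hs, ht⟩
  · intro s hs
    exact inter_union_inter_of_subset (Finset.mem_powerset.1 (Finset.mem_filter.1 hs).1)
  · rintro ⟨s, t⟩ hst
    obtain ⟨hs, ht⟩ := Finset.mem_product.1 hst
    exact Prod.ext (hST s hs t ht).1 (hST s hs t ht).2
  · intro s hs
    have hsAB := Finset.mem_powerset.1 (Finset.mem_filter.1 hs).1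
    rw [← pow_add, ← Finset.card_union_of_disjoint
      (hAB.mono Finset.inter_subset_right Finset.inter_subset_right),
      inter_union_inter_of_subset hsAB]

theorem sizePoly_dissocSets (G : SimpleGraph V) (A : Finset V) (r : V) :
    sizePoly (dissocSets G A) =
      sizePoly (outSets G A r) + sizePoly (isolatedSets G A r) + sizePoly (matchedSets G A r) := by
  rw [← sizePoly_union, ← sizePoly_union]
  · congr 1
    ext s
    simp only [dissocSets, outSets, isolatedSets, matchedSets, Finset.mem_filter, Finset.mem_union]
    have (hs : IsDissoc G s) (hr : r ∈ s) := Nat.le_one_iff_eq_zero_or_eq_one.1 (hs r hr)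
    tauto
  · simp only [Finset.disjoint_left, outSets, isolatedSets, matchedSets, Finset.mem_filter,
      Finset.mem_union]
    grind
  · simp only [Finset.disjoint_left, outSets, isolatedSets, Finset.mem_filter]
    tauto

namespace SingleEdge

variable {G : SimpleGraph V} {A B : Finset V} {r u : V}

theorem sizePoly_outSets_union (h : SingleEdge G A B r u) :
    sizePoly (outSets G (A ∪ B) r) = sizePoly (outSets G A r) * sizePoly (dissocSets G B) := by
  rw [h.outSets_union]
  exact sizePoly_glue h.disjoint (Finset.filter_subset _ _) (Finset.filter_subset _ _)

theorem sizePoly_isolatedSets_union (h : SingleEdge G A B r u) :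
    sizePoly (isolatedSets G (A ∪ B) r) =
      sizePoly (isolatedSets G A r) * sizePoly (outSets G B u) := by
  rw [h.isolatedSets_union]
  exact sizePoly_glue h.disjoint (Finset.filter_subset _ _) (Finset.filter_subset _ _)

theorem sizePoly_matchedSets_union (h : SingleEdge G A B r u) :
    sizePoly (matchedSets G (A ∪ B) r) = sizePoly (matchedSets G A r) * sizePoly (outSets G B u) +
      sizePoly (isolatedSets G A r) * sizePoly (isolatedSets G B u) := by
  rw [h.matchedSets_union, sizePoly_union]
  · congr 1 <;>
      exact sizePoly_glue h.disjoint (Finset.filter_subset _ _) (Finset.filter_subset _ _)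
  · simp only [Finset.disjoint_left, glue, matchedSets, isolatedSets, Finset.mem_filter]
    grind

end SingleEdge

/-- `p` has degree at most `d` and coefficient `c` at `X ^ d`; unlike a leading coefficient, `c` may
vanish. -/
def HasTop (p : ℕ[X]) (d c : ℕ) : Prop :=
  p.natDegree ≤ d ∧ p.coeff d = c

namespace HasTop

variable {p q : ℕ[X]} {c d a b e : ℕ}

theorem add (hp : HasTop p d a) (hq : HasTop q d b) : HasTop (p + q) d (a + b) :=
  ⟨natDegree_add_le_of_degree_le hp.1 hq.1, by rw [coeff_add, hp.2, hq.2]⟩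

theorem mul (hp : HasTop p d a) (hq : HasTop q e b) : HasTop (p * q) (d + e) (a * b) :=
  ⟨natDegree_mul_le_of_le hp.1 hq.1, by rw [coeff_mul_add_eq_of_natDegree_le hp.1 hq.1, hp.2, hq.2]⟩

theorem mono (hp : HasTop p d c) (hde : d ≤ e) : HasTop p e (if d = e then c else 0) := by
  refine ⟨hp.1.trans hde, ?_⟩
  split_ifs with h
  · exact h ▸ hp.2
  · exact coeff_eq_zero_of_natDegree_lt (hp.1.trans_lt (lt_of_le_of_ne hde h))

end HasTop

/-- The excess of the largest dissociation sets with isolated root over those avoiding the root. -/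
def RootKind.isolatedGain : RootKind → ℕ
  | neutral => 0
  | free => 1
  | paired => 0

/-- The excess of the largest dissociation sets with matched root over those avoiding the root. -/
def RootKind.matchedGain : RootKind → ℕ
  | neutral => 0
  | free => 1
  | paired => 1

theorem RootState.hasTop_total {a : RootState} {o i m : ℕ[X]} {d : ℕ} (ho : HasTop o d a.out)
    (hi : HasTop i (d + a.kind.isolatedGain) a.isolated)
    (hm : HasTop m (d + a.kind.matchedGain) a.matched) :
    HasTop (o + i + m) (d + a.kind.matchedGain) a.total := by
  obtain ⟨k, x, y, z⟩ := a
  have hk : k.isolatedGain ≤ k.matchedGain := by cases k <;> decide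
  convert ((ho.mono (Nat.le_add_right _ _)).add (hi.mono (Nat.add_le_add_left hk _))).add hm using 1
  cases k <;> simp [RootState.total, RootKind.isolatedGain, RootKind.matchedGain]

/-- `a` is the state of a rooted tree in which the dissociation sets avoiding the root, with an
isolated root and with a matched root have the generating polynomials `o`, `i` and `m`. -/
def RootState.IsStateOf (a : RootState) (o i m : ℕ[X]) : Prop :=
  ∃ d, HasTop o d a.out ∧ HasTop i (d + a.kind.isolatedGain) a.isolated ∧
    HasTop m (d + a.kind.matchedGain) a.matched

namespace RootState.IsStateOf

variable {a b : RootState} {o i m o' i' m' : ℕ[X]}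

theorem graft (ha : a.IsStateOf o i m) (hb : b.IsStateOf o' i' m') :
    (a.graft b).IsStateOf (o * (o' + i' + m')) (i * o') (m * o' + i * i') := by
  obtain ⟨d, ho, hi, hm⟩ := ha
  obtain ⟨e, ho', hi', hm'⟩ := hb
  have hT := hasTop_total ho' hi' hm'
  obtain ⟨k, x, y, z⟩ := a
  obtain ⟨l, p, q, w⟩ := b
  refine ⟨d + (e + l.matchedGain), ?_, ?_, ?_⟩
  · rw [out_graft]
    exact ho.mul hT
  · convert (hi.mul ho').mono ?_ using 1 <;> cases k <;> cases l <;>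
      grind [RootState.graft, RootKind.isolatedGain, RootKind.matchedGain]
  · convert ((hm.mul ho').mono ?_).add ((hi.mul hi').mono ?_) using 1 <;> cases k <;> cases l <;>
      grind [RootState.graft, RootKind.isolatedGain, RootKind.matchedGain]

end RootState.IsStateOf

namespace Realizes

variable {G : SimpleGraph V} {A : Finset V} {r : V} {t : PlaneTree}

theorem isStateOf_state (h : Realizes G A r t) :
    t.state.IsStateOf (sizePoly (outSets G A r)) (sizePoly (isolatedSets G A r))
      (sizePoly (matchedSets G A r)) := by
  induction h with
  | single r =>
    refine ⟨0, ?_, ?_, ?_⟩ <;>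
      simp [outSets_singleton, isolatedSets_singleton, matchedSets_singleton, sizePoly,
        HasTop, PlaneTree.state, RootKind.isolatedGain, RootKind.matchedGain]
  | @graft A B r u t s _ _ hAB ht hs =>
    rw [hAB.sizePoly_outSets_union, hAB.sizePoly_isolatedSets_union,
      hAB.sizePoly_matchedSets_union, sizePoly_dissocSets G B u]
    exact ht.graft hs

theorem exists_hasTop_total (h : Realizes G A r t) :
    ∃ d, HasTop (sizePoly (dissocSets G A)) d t.total := by
  obtain ⟨d, ho, hi, hm⟩ := h.isStateOf_state
  rw [sizePoly_dissocSets G A r]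
  exact ⟨_, RootState.hasTop_total ho hi hm⟩

end Realizes

theorem numMaxDissoc_eq_of_hasTop [Fintype V] {G : SimpleGraph V} {d c : ℕ}
    (h : HasTop (sizePoly (dissocSets G Finset.univ)) d c) (hc : 0 < c) : numMaxDissoc G = c := by
  have card_le (s : Finset V) (hs : IsDissoc G s) : s.card ≤ d := by
    refine (le_natDegree_of_ne_zero ?_).trans h.1
    rw [coeff_sizePoly]
    exact Finset.card_ne_zero_of_mem (a := s) (by simpa [dissocSets] using hs)
  have hcard := h.2
  rw [coeff_sizePoly] at hcard
  obtain ⟨s₀, hs₀⟩ := Finset.card_pos.1 (hcard.symm ▸ hc)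
  have hmax : IsGreatest
      {n | ∃ s : Finset V, (s : Set V) ⊆ Set.univ ∧ IsDissoc G s ∧ s.card = n} d := by
    refine ⟨⟨s₀, by simpa [dissocSets] using hs₀⟩, ?_⟩
    rintro n ⟨s, -, hs, rfl⟩
    exact card_le s hs
  rw [← hcard, numMaxDissoc, numMaxDissocOn, Nat.card_eq_fintype_card, Fintype.card_subtype]
  congr 1
  ext s
  simp [IsMaxDissocOn, dissocSets, show dissNumOn G Set.univ = d from hmax.csSup_eq]

theorem Realizes.numMaxDissoc_eq [Fintype V] {G : SimpleGraph V} {r : V} {t : PlaneTree}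
    (h : Realizes G Finset.univ r t) : numMaxDissoc G = t.total :=
  let ⟨_, hd⟩ := h.exists_hasTop_total
  numMaxDissoc_eq_of_hasTop hd t.isPositive_state.total_pos

end Polynomial

/-! ### Members of `ℋ` -/

namespace Realizes

theorem exists_bijOn {W : Type*} {G : SimpleGraph V} {H : SimpleGraph W} {A : Finset V}
    {A' : Finset W} {r : V} {r' : W} {t : PlaneTree} (h : Realizes G A r t)
    (h' : Realizes H A' r' t) :
    ∃ f : V → W, Set.BijOn f A A' ∧ f r = r' ∧ ∀ a ∈ A, ∀ b ∈ A, H.Adj (f a) (f b) ↔ G.Adj a b := by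
  induction h generalizing A' r' with
  | single r =>
    cases h'
    exact ⟨fun _ => r', by simp, rfl, by simp⟩
  | @graft A B r u t s _ _ hAB iht ihs =>
    cases h' with
    | @graft A' B' _ u' _ _ ht' hs' hAB' =>
      obtain ⟨f, hf, hfr, hfadj⟩ := iht ht'
      obtain ⟨g, hg, hgu, hgadj⟩ := ihs hs'
      have hdisj : Disjoint (A : Set V) B := Finset.disjoint_coe.2 hAB.disjoint
      have hA : Set.EqOn ((A : Set V).piecewise f g) f A := Set.piecewise_eqOn _ _ _
      have hB : Set.EqOn ((A : Set V).piecewise f g) g B := fun b hb =>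
        Set.piecewise_eq_of_notMem _ _ _ (Set.disjoint_right.1 hdisj hb)
      have hcross (a) (ha : a ∈ A) (b) (hb : b ∈ B) : H.Adj (f a) (g b) ↔ G.Adj a b := by
        rw [hAB'.adj_iff _ (hf.mapsTo ha) _ (hg.mapsTo hb), hAB.adj_iff a ha b hb, ← hfr, ← hgu,
          hf.injOn.eq_iff ha hAB.left_mem, hg.injOn.eq_iff hb hAB.right_mem]
      refine ⟨(A : Set V).piecewise f g, ?_, (hA hAB.left_mem).trans hfr, fun a ha b hb => ?_⟩
      · rw [Finset.coe_union, Finset.coe_union]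
        refine (hf.congr hA.symm).union (hg.congr hB.symm) ((Set.injOn_union hdisj).2
          ⟨hf.injOn.congr hA.symm, hg.injOn.congr hB.symm, fun a ha b hb => ?_⟩)
        rw [hA ha, hB hb]
        exact fun hab =>
          Finset.disjoint_left.1 hAB'.disjoint (hf.mapsTo ha) (hab ▸ hg.mapsTo hb)
      · obtain ha | ha := Finset.mem_union.1 ha <;> obtain hb | hb := Finset.mem_union.1 hb
        · rw [hA ha, hA hb, hfadj a ha b hb]
        · rw [hA ha, hB hb, hcross a ha b hb]
        · rw [hB ha, hA hb, H.adj_comm, G.adj_comm, hcross b hb a ha]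
        · rw [hB ha, hB hb, hgadj a ha b hb]

theorem nonempty_iso {W : Type*} [Fintype V] [Fintype W] {G : SimpleGraph V} {H : SimpleGraph W}
    {r : V} {r' : W} {t : PlaneTree} (h : Realizes G Finset.univ r t)
    (h' : Realizes H Finset.univ r' t) : Nonempty (G ≃g H) := by
  obtain ⟨f, hf, -, hadj⟩ := h.exists_bijOn h'
  rw [Finset.coe_univ, Finset.coe_univ, Set.bijOn_univ] at hf
  exact ⟨⟨Equiv.ofBijective f hf, hadj _ (Finset.mem_univ _) _ (Finset.mem_univ _)⟩⟩

theorem univ_of_forall_mem [Fintype V] {G : SimpleGraph V} {A : Finset V} {r : V} {t : PlaneTree}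
    (h : Realizes G A r t) (hA : ∀ v, v ∈ A) : Realizes G Finset.univ r t :=
  Finset.eq_univ_of_forall hA ▸ h

end Realizes

section HModel

variable {l : ℕ} (pa : Bool) (bt : Fin l → Bool)

theorem exists_realizes_branch (i : Fin l) :
    ∃ B, Realizes (HModel pa l bt) B (.inr (.inr (i, 0))) (.branch (bt i)) ∧
      ∀ x, x ∈ B ↔ ∃ j, x = .inr (.inr (i, j)) := by
  have h₀ := Realizes.single (G := HModel pa l bt) (.inr (.inr (i, 0)))
  cases hi : bt i with
  | true =>
    have h₁₂ := (Realizes.single (G := HModel pa l bt) (.inr (.inr (i, 1)))).graft_single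
      (v := .inr (.inr (i, 2))) (by simp) (by simp [HModel, HBase, hi])
    refine ⟨_, h₀.graft h₁₂ ⟨?_, ?_, ?_, ?_⟩, fun x => ?_⟩
    · simp
    · simp
    · simp
    · simp [HModel, HBase, hi]
    · simpa [Fin.exists_fin_succ] using or_left_comm
  | false =>
    have h₀₁ := h₀.graft_single (v := .inr (.inr (i, 1))) (by simp) (by simp [HModel, HBase, hi])
    refine ⟨_, h₀₁.graft_single (v := .inr (.inr (i, 2))) ?_ ?_, fun x => ?_⟩ <;>
      simp [HModel, HBase, hi, Fin.exists_fin_succ]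

theorem exists_realizes_hub {is : List (Fin l)} (his : is.Nodup) :
    ∃ A, Realizes (HModel pa l bt) A (.inl ()) (.hub (is.map bt)) ∧
      ∀ x, x ∈ A ↔ x = .inl () ∨ ∃ i ∈ is, ∃ j, x = .inr (.inr (i, j)) := by
  induction is with
  | nil => exact ⟨_, .single _, by simp⟩
  | cons i is ih =>
    obtain ⟨hi, his⟩ := List.nodup_cons.1 his
    obtain ⟨A, hA, memA⟩ := ih his
    obtain ⟨B, hB, memB⟩ := exists_realizes_branch pa bt i
    refine ⟨_, hA.graft hB ⟨?_, hA.root_mem, hB.root_mem, ?_⟩, fun x => ?_⟩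
    · simp only [Finset.disjoint_left, memA, memB]
      rintro _ (rfl | ⟨i', hi', j, rfl⟩) ⟨j', hj'⟩
      · cases hj'
      · cases hj'
        exact hi hi'
    · simp only [memA, memB]
      rintro _ (rfl | ⟨i', hi', j, rfl⟩) _ ⟨j', rfl⟩
      · simp [HModel, HBase]
      · have : i ≠ i' := fun h => hi (h ▸ hi')
        simp [HModel, HBase, this, this.symm]
    · simp [memA, memB, or_assoc, or_comm]

theorem realizes_HModel (bs : List Bool) :
    Realizes (HModel pa bs.length bs.get) Finset.univ (.inl ()) (.familyH pa bs) := by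
  obtain ⟨A, hA, memA⟩ := exists_realizes_hub pa bs.get (List.nodup_finRange bs.length)
  rw [List.map_get_finRange] at hA
  cases pa with
  | true =>
    have hs := (Realizes.single (G := HModel true bs.length bs.get) (.inr (.inl 0))).graft_single
      (v := .inr (.inl 1)) (by simp) (by simp [HModel, HBase])
    refine (hA.graft hs ⟨?_, hA.root_mem, hs.root_mem, ?_⟩).univ_of_forall_mem ?_
    · simp [memA]
    · simp only [memA, Finset.mem_union, Finset.mem_singleton]
      rintro _ (rfl | ⟨i', _, j, rfl⟩) _ (rfl | rfl) <;> simp [HModel, HBase]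
    · simp [memA, Fin.forall_fin_two]
  | false =>
    refine Realizes.univ_of_forall_mem ((hA.graft_single (v := .inr (.inl 0)) ?_ ?_).graft_single
      (v := .inr (.inl 1)) ?_ ?_) ?_
    · simp [memA]
    · simp only [memA]
      rintro _ (rfl | ⟨i', _, j, rfl⟩) <;> simp [HModel, HBase]
    · simp [memA]
    · simp only [memA, Finset.mem_union, Finset.mem_singleton]
      rintro _ ((rfl | ⟨i', _, j, rfl⟩) | rfl) <;> simp [HModel, HBase]
    · simp [memA, Fin.forall_fin_two]

end HModel

theorem tree_not_in_H_bound {V : Type*} [Fintype V] (T : SimpleGraph V) (n : ℕ)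
    (hn : Fintype.card V = n) (h3 : 3 ≤ n) (hmod : n % 3 = 0)
    (htree : T.IsTree)
    (hnotH : ∀ (pa : Bool) (l : ℕ) (bt : Fin l → Bool), IsEmpty (T ≃g HModel pa l bt)) :
    numMaxDissoc T ≤ 3 ^ (n / 3 - 1) + 1 := by
  obtain ⟨r, t, ht⟩ := exists_realizes_univ htree
  have hsize : t.size = 3 * (n / 3 - 1) + 3 := by
    rw [← ht.card_eq, Finset.card_univ]
    omega
  rw [ht.numMaxDissoc_eq]
  obtain hle | ⟨pa, bs, hH⟩ := t.isBounded.mod_zero hsize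
  · exact hle
  · obtain ⟨_, ht'⟩ := ht.reroot hH
    obtain ⟨e⟩ := ht'.nonempty_iso (realizes_HModel pa bs)
    exact ((hnotH _ _ _).false e).elim
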